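/- arXiv:2602.14325 — 4 statements merged into one kernel-verified Lean document; each statement's English description precedes it below -/
import Mathlib

section
/- If y₁ ≡ y₁′ (mod 2b) and y₂ ≡ y₂′ (mod 2b), then the Lengyel transfer games L(b;x₁,y₁;x₂,y₂) and L(b;x₁,y₁′;x₂,y₂′) have the same Sprague–Grundy function: for all (x,y) ∈ ℕ×ℕ, SG_{L(b;x₁,y₁;x₂,y₂)}(x,y) = SG_{L(b;x₁,y₁′;x₂,y₂′)}(x,y). -/
/-- The minimum excludant of a set of naturals: the least natural number not in the set. -/
noncomputable def mex (S : Set ℕ) : ℕ := sInf {n : ℕ | n ∉ S}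

/-- `SG` is the Sprague–Grundy function of the Lengyel transfer game `L(b; x₁,y₁; x₂,y₂)`:
from `(x,y)` one may move to `(x, y−b)` (when `y ≥ b`), to `(x−x₁, y+y₁)` (when `x ≥ x₁`),
or to `(x−x₂, y+y₂)` (when `x ≥ x₂`), and `SG` satisfies the mex recurrence. -/
def IsLengyelSG (b x1 y1 x2 y2 : ℕ) (SG : ℕ → ℕ → ℕ) : Prop :=
  ∀ x y : ℕ, SG x y = mex
    ((if b ≤ y then ({SG x (y - b)} : Set ℕ) else ∅) ∪
     (if x1 ≤ x then ({SG (x - x1) (y + y1)} : Set ℕ) else ∅) ∪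
     (if x2 ≤ x then ({SG (x - x2) (y + y2)} : Set ℕ) else ∅))

theorem mex_notMem {S : Set ℕ} (hS : S.Finite) : mex S ∉ S := by
  have h : {n : ℕ | n ∉ S}.Nonempty := hS.infinite_compl.nonempty
  exact Nat.sInf_mem h

theorem mex_insert_ne {S : Set ℕ} (hS : S.Finite) {a : ℕ} (ha : a ≠ mex S) :
    mex ({a} ∪ S) = mex S := by
  have h1 := mex_notMem hS
  have h2 := mex_notMem ((Set.finite_singleton a).union hS)
  apply le_antisymm
  · apply Nat.sInf_le
    simp only [Set.mem_setOf_eq, Set.mem_union, Set.mem_singleton_iff, not_or]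
    exact ⟨fun h => ha h.symm, h1⟩
  · apply Nat.sInf_le
    exact fun h => h2 (Or.inr h)

/-- Options that change the first coordinate. -/
def optT (x1 y1 x2 y2 : ℕ) (SG : ℕ → ℕ → ℕ) (x y : ℕ) : Set ℕ :=
  (if x1 ≤ x then ({SG (x - x1) (y + y1)} : Set ℕ) else ∅) ∪
     (if x2 ≤ x then ({SG (x - x2) (y + y2)} : Set ℕ) else ∅)

theorem optT_finite (x1 y1 x2 y2 : ℕ) (SG : ℕ → ℕ → ℕ) (x y : ℕ) :
    (optT x1 y1 x2 y2 SG x y).Finite := by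
  unfold optT
  apply Set.Finite.union <;> split_ifs <;> simp

theorem sg_ge {b x1 y1 x2 y2 : ℕ} {SG : ℕ → ℕ → ℕ} (h : IsLengyelSG b x1 y1 x2 y2 SG)
    (x y : ℕ) : SG x (y + b) = mex ({SG x y} ∪ optT x1 y1 x2 y2 SG x (y + b)) := by
  have := h x (y + b)
  rw [Set.union_assoc, if_pos (Nat.le_add_left b y), Nat.add_sub_cancel] at this
  exact this

theorem sg_lt {b x1 y1 x2 y2 : ℕ} {SG : ℕ → ℕ → ℕ} (h : IsLengyelSG b x1 y1 x2 y2 SG)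
    (x y : ℕ) (hy : y < b) : SG x y = mex (optT x1 y1 x2 y2 SG x y) := by
  have := h x y
  rw [Set.union_assoc, if_neg (Nat.not_le.mpr hy), Set.empty_union] at this
  exact this

theorem sg_periodic {b x1 y1 x2 y2 : ℕ} (hb : 0 < b) (hx1 : 0 < x1) (hx2 : 0 < x2)
    {SG : ℕ → ℕ → ℕ} (h : IsLengyelSG b x1 y1 x2 y2 SG) (x : ℕ) :
    Function.Periodic (SG x) (2 * b) := by
  induction x using Nat.strong_induction_on with
  | _ x ihx =>
  have hT : ∀ y, optT x1 y1 x2 y2 SG x (y + 2 * b) = optT x1 y1 x2 y2 SG x y := by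
    intro y
    unfold optT
    congr 1
    · split_ifs with hx
      · rw [Nat.add_right_comm, ihx (x - x1) (by omega)]
      · rfl
    · split_ifs with hx
      · rw [Nat.add_right_comm, ihx (x - x2) (by omega)]
      · rfl
  intro y
  induction y using Nat.strong_induction_on with
  | _ y ihy =>
  have e2 := sg_ge h x (y + b)
  rw [show y + b + b = y + 2 * b by ring, hT] at e2
  rcases Nat.lt_or_ge y b with hy | hy
  · have e0 := sg_lt h x y hy
    have hne : SG x (y + b) ≠ SG x y := by
      have e1 := sg_ge h x y
      have := mex_notMem ((Set.finite_singleton (SG x y)).union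
        (optT_finite x1 y1 x2 y2 SG x (y + b)))
      rw [← e1] at this
      exact fun hh => this (Or.inl hh)
    rw [e2, e0]
    exact mex_insert_ne (optT_finite ..) (e0 ▸ hne)
  · obtain ⟨z, rfl⟩ := Nat.exists_eq_add_of_le' hy
    rw [e2, show z + b + b = z + 2 * b by ring, ihy z (by omega)]
    exact (sg_ge h x z).symm

/-- If `y₁ ≡ y₁' (mod 2b)` and `y₂ ≡ y₂' (mod 2b)`, then `L(b;x₁,y₁;x₂,y₂)` and
`L(b;x₁,y₁';x₂,y₂')` have the same Sprague–Grundy function. -/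
theorem sg_congr_mod_two_b (b x1 x2 y1 y2 y1' y2' : ℕ)
    (hb : 0 < b) (hx1 : 0 < x1) (hx2 : 0 < x2)
    (h1 : y1 ≡ y1' [MOD 2 * b]) (h2 : y2 ≡ y2' [MOD 2 * b])
    (SG SG' : ℕ → ℕ → ℕ)
    (hSG : IsLengyelSG b x1 y1 x2 y2 SG) (hSG' : IsLengyelSG b x1 y1' x2 y2' SG') :
    ∀ x y : ℕ, SG x y = SG' x y := by
  intro x
  induction x using Nat.strong_induction_on with
  | _ x ihx =>
  have key : ∀ u {a c : ℕ}, a ≡ c [MOD 2 * b] → SG' u a = SG' u c := by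
    intro u a c hac
    rw [← (sg_periodic hb hx1 hx2 hSG' u).map_mod_nat a,
      ← (sg_periodic hb hx1 hx2 hSG' u).map_mod_nat c, hac]
  have hT : ∀ y, optT x1 y1 x2 y2 SG x y = optT x1 y1' x2 y2' SG' x y := by
    intro y
    unfold optT
    congr 1
    · split_ifs with hx
      · rw [ihx (x - x1) (by omega), key _ (h1.add_left y)]
      · rfl
    · split_ifs with hx
      · rw [ihx (x - x2) (by omega), key _ (h2.add_left y)]
      · rfl
  intro y
  induction y using Nat.strong_induction_on with
  | _ y ihy =>
  rcases Nat.lt_or_ge y b with hy | hy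
  · rw [sg_lt hSG x y hy, sg_lt hSG' x y hy, hT]
  · obtain ⟨z, rfl⟩ := Nat.exists_eq_add_of_le' hy
    rw [sg_ge hSG x z, sg_ge hSG' x z, hT, ihy z (by omega)]
end

section
/- (Generalized nim-periodicity) Let S = {u₁, …, u_k} be a finite set of vectors in ℤⁿ, each strictly lexicographically negative, and let SG : ℕⁿ → ℕ be the Sprague–Grundy function of the vector game on ℕⁿ with move set S, i.e. SG(v) = mex { SG(v+u) : u ∈ S, v+u ∈ ℕⁿ }. Suppose some u_i ∈ S satisfies: for every v ∈ ℕⁿ with v + u_i ∈ ℕⁿ and every j ≠ i, v + u_j ∈ ℕⁿ if and only if v + u_i + u_j ∈ ℕⁿ. Then the game is nim-periodic in u_i: for every v ∈ ℕⁿ with v + u_i ∈ ℕⁿ, SG(v + u_i) = SG(v) ⊕ 1. -/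
/-- A vector of `ℤⁿ` is strictly lexicographically negative: its first nonzero
component is negative. -/
def LexNeg {n : ℕ} (u : Fin n → ℤ) : Prop :=
  ∃ i : Fin n, u i < 0 ∧ ∀ j : Fin n, j < i → u j = 0

theorem mex_spec {T : Set ℕ} (hT : T.Finite) : mex T ∉ T := by
  have : {n : ℕ | n ∉ T}.Nonempty := hT.infinite_compl.nonempty
  exact Nat.sInf_mem this

theorem mem_of_lt_mex {T : Set ℕ} {m : ℕ} (h : m < mex T) : m ∈ T := by
  by_contra hm
  exact absurd (Nat.sInf_le (s := {n : ℕ | n ∉ T}) hm) (not_le.mpr h)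

theorem mex_eq {T : Set ℕ} {g : ℕ} (hg : g ∉ T) (h : ∀ m < g, m ∈ T) : mex T = g := by
  apply le_antisymm
  · exact Nat.sInf_le (s := {n : ℕ | n ∉ T}) hg
  · by_contra hlt
    have hm : mex T ∈ {n : ℕ | n ∉ T} := Nat.sInf_mem ⟨g, hg⟩
    exact hm (h _ (not_le.mp hlt))

theorem xor_one_cases (g : ℕ) :
    (g % 2 = 0 ∧ g ^^^ 1 = g + 1) ∨ (g % 2 = 1 ∧ (g ^^^ 1) + 1 = g) := by
  rcases Nat.even_or_odd g with hg | hg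
  · have := Nat.even_iff.mp hg
    exact Or.inl ⟨this, Nat.xor_one_of_even hg⟩
  · have := Nat.odd_iff.mp hg
    have h2 := Nat.xor_one_of_odd hg
    exact Or.inr ⟨this, by omega⟩

theorem lex_move {n : ℕ} (v : Fin n → ℕ) (u : Fin n → ℤ) (hu : LexNeg u)
    (hf : ∀ i, 0 ≤ (v i : ℤ) + u i) :
    toLex (fun i => ((v i : ℤ) + u i).toNat) < toLex v := by
  obtain ⟨i, hi, hj⟩ := hu
  refine ⟨i, fun j hji => ?_, ?_⟩
  · have := hj j hji
    simp [this]
  · have := hf i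
    show ((v i : ℤ) + u i).toNat < v i
    omega

/-- Generalized nim-periodicity for vector games.  Let `SG` be the Sprague–Grundy
function of the vector game on `ℕⁿ` with finite move set `S` of strictly
lexicographically negative vectors.  If `ui ∈ S` is such that for every position `v`
with `v + ui ∈ ℕⁿ` and every other move `u ∈ S`, `v + u ∈ ℕⁿ ↔ v + ui + u ∈ ℕⁿ`,
then the game is nim-periodic in `ui`: `SG(v + ui) = SG(v) ⊕ 1` whenever `v + ui ∈ ℕⁿ`. -/
theorem generalized_nim_periodicity (n : ℕ) (S : Finset (Fin n → ℤ))
    (hS : ∀ u ∈ S, LexNeg u)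
    (SG : (Fin n → ℕ) → ℕ)
    (hSG : ∀ v : Fin n → ℕ, SG v = mex
      {m : ℕ | ∃ u ∈ S, (∀ i : Fin n, 0 ≤ (v i : ℤ) + u i) ∧
        m = SG (fun i => ((v i : ℤ) + u i).toNat)})
    (ui : Fin n → ℤ) (hui : ui ∈ S)
    (hcond : ∀ v : Fin n → ℕ, (∀ i : Fin n, 0 ≤ (v i : ℤ) + ui i) →
      ∀ u ∈ S, u ≠ ui →
        ((∀ i : Fin n, 0 ≤ (v i : ℤ) + u i) ↔ (∀ i : Fin n, 0 ≤ (v i : ℤ) + ui i + u i))) :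
    ∀ v : Fin n → ℕ, (∀ i : Fin n, 0 ≤ (v i : ℤ) + ui i) →
      SG (fun i => ((v i : ℤ) + ui i).toNat) = SG v ^^^ 1 := by
  intro v
  induction hx : toLex v using WellFoundedLT.induction generalizing v with
  | ind x ih =>
  subst hx
  replace ih : ∀ u ∈ S, (∀ i, 0 ≤ (v i : ℤ) + u i) →
      (∀ i, 0 ≤ (v i : ℤ) + u i + ui i) →
      SG (fun i => ((v i : ℤ) + u i + ui i).toNat)
        = SG (fun i => ((v i : ℤ) + u i).toNat) ^^^ 1 := by
    intro u hu hf hf2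
    have key : ∀ i, (((((v i : ℤ) + u i).toNat : ℕ)) : ℤ) = (v i : ℤ) + u i :=
      fun i => Int.toNat_of_nonneg (hf i)
    have := ih _ (lex_move v u (hS u hu) hf) (fun i => ((v i : ℤ) + u i).toNat) rfl
    simp only [key] at this
    exact this hf2
  intro hv
  have key : ∀ i, (((((v i : ℤ) + ui i).toNat : ℕ)) : ℤ) = (v i : ℤ) + ui i :=
    fun i => Int.toNat_of_nonneg (hv i)
  have hfin : ∀ v : Fin n → ℕ, {m : ℕ | ∃ u ∈ S, (∀ i : Fin n, 0 ≤ (v i : ℤ) + u i) ∧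
        m = SG (fun i => ((v i : ℤ) + u i).toNat)}.Finite := by
    intro v
    refine (S.finite_toSet.image (fun u => SG (fun i => ((v i : ℤ) + u i).toNat))).subset ?_
    rintro m ⟨u, hu, -, rfl⟩
    exact ⟨u, hu, rfl⟩
  have hw := hSG (fun i => ((v i : ℤ) + ui i).toNat)
  have hnot := mex_spec (hfin (fun i => ((v i : ℤ) + ui i).toNat))
  have hmem := fun m => mem_of_lt_mex (m := m) (T := {m : ℕ | ∃ u ∈ S,
      (∀ i : Fin n, 0 ≤ ((((v i : ℤ) + ui i).toNat : ℕ) : ℤ) + u i) ∧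
        m = SG (fun i => (((((v i : ℤ) + ui i).toNat : ℕ) : ℤ) + u i).toNat)})
  rw [← hw] at hnot
  simp only [← hw] at hmem
  simp only [key, Set.mem_setOf_eq] at hnot hmem
  have hcomm : ∀ u : Fin n → ℤ, (fun i => ((v i : ℤ) + ui i + u i).toNat)
      = (fun i => ((v i : ℤ) + u i + ui i).toNat) := by
    intro u; funext i; rw [add_right_comm]
  have hne : ∀ u ∈ S, u ≠ ui → (∀ i, 0 ≤ (v i : ℤ) + u i) →
      (∀ i, 0 ≤ (v i : ℤ) + ui i + u i) ∧
      SG (fun i => ((v i : ℤ) + ui i + u i).toNat)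
        = SG (fun i => ((v i : ℤ) + u i).toNat) ^^^ 1 := by
    intro u hu hne hf
    have h1 := (hcond v hv u hu hne).mp hf
    refine ⟨h1, ?_⟩
    rw [hcomm]
    exact ih u hu hf (fun i => by rw [add_right_comm]; exact h1 i)
  generalize hg : SG (fun i => ((v i : ℤ) + ui i).toNat) = g at *
  have hv' : SG v = g ^^^ 1 := by
    rw [hSG v]
    apply mex_eq
    · rintro ⟨u, hu, hf, he⟩
      by_cases hu' : u = ui
      · subst hu'
        rw [hg] at he
        have := xor_one_cases g
        omega
      · obtain ⟨h1, h2⟩ := hne u hu hu' hf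
        refine hnot ⟨u, hu, h1, ?_⟩
        rw [h2, ← he, Nat.xor_assoc]
        simp
    · intro m hm
      by_cases hmg : m = g
      · exact ⟨ui, hui, hv, by rw [hg]; exact hmg⟩
      · have a := xor_one_cases g
        have b := xor_one_cases m
        obtain ⟨u, hu, hf, he⟩ := hmem (m ^^^ 1) (by omega)
        by_cases hu' : u = ui
        · subst hu'
          rw [ih u hu hv hf, hg] at he
          omega
        · have h0 := (hcond v hv u hu hu').mpr hf
          refine ⟨u, hu, h0, ?_⟩
          rw [(hne u hu hu' h0).2] at he
          exact Nat.xor_left_injective he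
  rw [hv', Nat.xor_assoc]
  simp
end

section
/- In any Lengyel transfer game L(b;x₁,y₁;x₂,y₂): for every (x,y) ∈ ℕ×ℕ with y ≥ y₁ + y₂, if SG*(x + x₁ + x₂, y − y₁ − y₂) = 2 then SG*(x,y) = 2. -/
theorem mex_zero_iff (S : Set ℕ) (hS : S.Finite) : mex S = 0 ↔ 0 ∉ S := by
  have hne : {n : ℕ | n ∉ S}.Nonempty := hS.infinite_compl.nonempty
  have hm := Nat.sInf_mem hne
  constructor
  · intro h
    unfold mex at h
    rw [h] at hm
    exact hm
  · intro h
    exact Nat.le_zero.1 (Nat.sInf_le (s := {n : ℕ | n ∉ S}) h)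

theorem mex_one_iff (S : Set ℕ) (hS : S.Finite) : mex S = 1 ↔ 0 ∈ S ∧ 1 ∉ S := by
  have hne : {n : ℕ | n ∉ S}.Nonempty := hS.infinite_compl.nonempty
  have hm : mex S ∉ S := Nat.sInf_mem hne
  have h0 := mex_zero_iff S hS
  constructor
  · intro h
    rw [h] at hm
    exact ⟨by by_contra h'; have := h0.2 h'; omega, hm⟩
  · rintro ⟨h, h1⟩
    have : mex S ≤ 1 := Nat.sInf_le (s := {n : ℕ | n ∉ S}) h1
    have : mex S ≠ 0 := fun h' => h0.1 h' h
    omega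

/-- Membership in the option-value set. -/
def OptVal (b x1 y1 x2 y2 : ℕ) (SG : ℕ → ℕ → ℕ) (x y n : ℕ) : Prop :=
  (b ≤ y ∧ SG x (y - b) = n) ∨ (x1 ≤ x ∧ SG (x - x1) (y + y1) = n) ∨
    (x2 ≤ x ∧ SG (x - x2) (y + y2) = n)

theorem sg_facts {b x1 x2 y1 y2 : ℕ} {SG : ℕ → ℕ → ℕ} (hSG : IsLengyelSG b x1 y1 x2 y2 SG)
    (x y : ℕ) : (SG x y = 0 ↔ ¬ OptVal b x1 y1 x2 y2 SG x y 0) ∧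
      (SG x y = 1 ↔ OptVal b x1 y1 x2 y2 SG x y 0 ∧ ¬ OptVal b x1 y1 x2 y2 SG x y 1) := by
  have h := hSG x y
  generalize hS : ((if b ≤ y then ({SG x (y - b)} : Set ℕ) else ∅) ∪
     (if x1 ≤ x then ({SG (x - x1) (y + y1)} : Set ℕ) else ∅) ∪
     (if x2 ≤ x then ({SG (x - x2) (y + y2)} : Set ℕ) else ∅)) = S at h
  have hfin : S.Finite := by
    rw [← hS]
    split_ifs <;> simp
  have hmem : ∀ n, n ∈ S ↔ OptVal b x1 y1 x2 y2 SG x y n := by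
    intro n
    rw [← hS]
    unfold OptVal
    split_ifs <;> simp [*] <;> grind
  rw [h, mex_zero_iff S hfin, mex_one_iff S hfin, hmem, hmem]
  exact ⟨Iff.rfl, Iff.rfl⟩

/-- Each column alternates: moving up by `b` swaps the values `0` and `1`. -/
theorem sg_swap {b x1 x2 y1 y2 : ℕ} (hb : 0 < b) (hx1 : 0 < x1) (hx2 : 0 < x2)
    {SG : ℕ → ℕ → ℕ} (hSG : IsLengyelSG b x1 y1 x2 y2 SG) (x : ℕ) :
    ∀ y, (SG x y = 0 ↔ SG x (y + b) = 1) ∧ (SG x y = 1 ↔ SG x (y + b) = 0) := by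
  induction x using Nat.strong_induction_on with
  | _ x ihx =>
  intro y
  induction y using Nat.strong_induction_on with
  | _ y ihy =>
  have f := sg_facts hSG x y
  have g := sg_facts hSG x (y + b)
  have a : x1 ≤ x → _ := fun h => ihx (x - x1) (by omega) (y + y1)
  have c : x2 ≤ x → _ := fun h => ihx (x - x2) (by omega) (y + y2)
  have p : b ≤ y → _ := fun h => ihy (y - b) (by omega)
  have e1 : y + b + y1 = y + y1 + b := by omega
  have e2 : y + b + y2 = y + y2 + b := by omega
  have e3 : b ≤ y → y - b + b = y := by omega
  have e4 : b ≤ y + b := by omega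
  simp only [OptVal, e1, e2, Nat.add_sub_cancel, e4, true_and] at f g
  by_cases hy : b ≤ y
  · have p := p hy
    rw [e3 hy] at p
    clear ihx ihy e1 e2 e3 e4 hSG
    grind
  · clear ihx ihy e1 e2 e3 e4 hSG p
    grind

/-- In any Lengyel transfer game: if `SG*(x+x₁+x₂, y−y₁−y₂) = 2` (with `y ≥ y₁+y₂`),
then `SG*(x,y) = 2`, where `SG* = min(SG, 2)`. -/
theorem bad_pair_pullback (b x1 x2 y1 y2 : ℕ) (hb : 0 < b) (hx1 : 0 < x1) (hx2 : 0 < x2)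
    (SG : ℕ → ℕ → ℕ) (hSG : IsLengyelSG b x1 y1 x2 y2 SG) :
    ∀ x y : ℕ, y1 + y2 ≤ y →
      min (SG (x + x1 + x2) (y - (y1 + y2))) 2 = 2 → min (SG x y) 2 = 2 := by
  intro x y hy h
  have hP := sg_facts hSG (x + x1 + x2) (y - (y1 + y2))
  have hA := sg_facts hSG (x + x2) (y - y2)
  have hC := sg_facts hSG (x + x1) (y - y1)
  have e1 : x + x1 + x2 - x1 = x + x2 := by omega
  have e2 : x + x1 + x2 - x2 = x + x1 := by omega
  have e3 : y - (y1 + y2) + y1 = y - y2 := by omega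
  have e4 : y - (y1 + y2) + y2 = y - y1 := by omega
  have e5 : x + x2 - x2 = x := by omega
  have e6 : x + x1 - x1 = x := by omega
  have e7 : y - y2 + y2 = y := by omega
  have e8 : y - y1 + y1 = y := by omega
  have l1 : x1 ≤ x + x1 + x2 := by omega
  have l2 : x2 ≤ x + x1 + x2 := by omega
  have l3 : x2 ≤ x + x2 := by omega
  have l4 : x1 ≤ x + x1 := by omega
  simp only [OptVal, e1, e2, e3, e4, l1, l2, true_and] at hP
  simp only [OptVal, e5, e7, l3, true_and] at hA
  simp only [OptVal, e6, e8, l4, true_and] at hC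
  have h2 : SG (x + x1 + x2) (y - (y1 + y2)) ≠ 0 ∧ SG (x + x1 + x2) (y - (y1 + y2)) ≠ 1 := by
    have := (min_eq_right_iff.1 h)
    constructor <;> intro h' <;> rw [h'] at this <;> simp at this
  have p' : b ≤ y - (y1 + y2) → SG (x + x1 + x2) (y - (y1 + y2) - b) ≠ 0 ∧
      SG (x + x1 + x2) (y - (y1 + y2) - b) ≠ 1 := by
    intro hle
    obtain ⟨z, hz⟩ : ∃ z, y - (y1 + y2) = z + b := ⟨y - (y1 + y2) - b, by omega⟩
    have q := sg_swap hb hx1 hx2 hSG (x + x1 + x2) z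
    rw [hz] at h2
    rw [hz, Nat.add_sub_cancel]
    exact ⟨fun w => h2.2 (q.1.1 w), fun w => h2.1 (q.2.1 w)⟩
  have hQ : SG x y ≠ 0 ∧ SG x y ≠ 1 := by
    clear e1 e2 e3 e4 e5 e6 e7 e8 l1 l2 l3 l4 h hSG
    grind
  omega
end

section
/- (First Main Theorem) Consider the Lengyel transfer game L(b;x₁,0;1,1) with b, x₁ positive integers. Say the game has period (p,q) if p is the least positive integer with SG(x+p, y) = SG(x,y) for all (x,y) ∈ ℕ×ℕ and q is the least positive integer with SG(x, y+q) = SG(x,y) for all (x,y) ∈ ℕ×ℕ. Then: (a) if b = 1 and x₁ = 1, the period is (2,2); (b) if b is even and x₁ = k·b for some odd integer k, the period is (2b, 2b); (c) in all other cases, the period is (2b(x₁+1), 2b). -/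
theorem mex_eq_of {S : Set ℕ} {n : ℕ} (h1 : n ∉ S) (h2 : ∀ m < n, m ∈ S) : mex S = n := by
  unfold mex
  apply le_antisymm
  · exact Nat.sInf_le h1
  · apply le_csInf ⟨n, h1⟩
    intro m hm
    by_contra h
    exact hm (h2 m (by omega))

theorem sg_step {b x1 : ℕ} {SG : ℕ → ℕ → ℕ} (hSG : IsLengyelSG b x1 0 1 1 SG) (x y v : ℕ)
    (h1 : b ≤ y → SG x (y - b) ≠ v) (h2 : x1 ≤ x → SG (x - x1) y ≠ v)
    (h3 : 1 ≤ x → SG (x - 1) (y + 1) ≠ v)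
    (h4 : ∀ m < v, (b ≤ y ∧ SG x (y - b) = m) ∨ (x1 ≤ x ∧ SG (x - x1) y = m) ∨
      (1 ≤ x ∧ SG (x - 1) (y + 1) = m)) : SG x y = v := by
  rw [hSG x y]
  apply mex_eq_of
  · simp only [Set.mem_union, not_or]
    refine ⟨⟨?_, ?_⟩, ?_⟩
    · split_ifs with h
      · exact fun e => h1 h (Set.mem_singleton_iff.1 e).symm
      · simp
    · split_ifs with h
      · exact fun e => h2 h (Set.mem_singleton_iff.1 e).symm
      · simp
    · split_ifs with h
      · exact fun e => h3 h (Set.mem_singleton_iff.1 e).symm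
      · simp
  · intro m hm
    simp only [Set.mem_union]
    rcases h4 m hm with ⟨h, e⟩ | ⟨h, e⟩ | ⟨h, e⟩
    · left; left; simp [h, e]
    · left; right; simp [h, e]
    · right; simp [h, e]

/-- Closed formula for the value at `(i (x₁+1) + r, y)`. -/
def LF (b x1 i r y : ℕ) : ℕ :=
  if r < x1 then (r + (y + i + r) / b) % 2
  else if (x1 + (y + i + x1) / b) % 2 = ((y + i) / b + 1) % 2 then ((y + i) / b + 1) % 2
  else 2 + (y / b) % 2

theorem sg_formula {b x1 : ℕ} (hb : 0 < b) (hx1 : 0 < x1) (hne : ¬ (b = 1 ∧ x1 = 1))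
    {SG : ℕ → ℕ → ℕ} (hSG : IsLengyelSG b x1 0 1 1 SG) :
    ∀ x i r y, x = i * (x1 + 1) + r → r ≤ x1 → SG x y = LF b x1 i r y := by
  intro x
  induction x using Nat.strong_induction_on with
  | _ x ihx =>
  intro i r y
  induction y using Nat.strong_induction_on with
  | _ y ihy =>
  intro hx hr
  have hy : b ≤ y → SG x (y - b) = LF b x1 i r (y - b) :=
    fun h => ihy (y - b) (by omega) hx hr
  have hdiv : ∀ t, b ≤ y → (y + t) / b = (y - b + t) / b + 1 := by
    intro t h
    rw [← Nat.add_div_right _ hb]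
    congr 1; omega
  rcases Nat.lt_or_ge r x1 with hlt | hge
  · have hyv : b ≤ y → SG x (y - b) = 1 - LF b x1 i r y := by
      intro h
      rw [hy h]
      have := hdiv (i + r) h
      simp only [LF, hlt, if_true, add_assoc]
      omega
    rcases Nat.eq_zero_or_pos r with h0 | hpos
    · subst h0
      rcases i with _ | j
      · -- x = 0
        have hx0 : x = 0 := by omega
        have hv : y < b → LF b x1 0 0 y = 0 := by
          intro h; simp [LF, hx1, Nat.div_eq_of_lt h]
        have hle : LF b x1 0 0 y < 2 := by simp only [LF, hx1, if_true]; omega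
        apply sg_step hSG
        · intro h; rw [hyv h]; omega
        · intro h; omega
        · intro h; omega
        · intro m hm
          by_cases h : b ≤ y
          · left; refine ⟨h, ?_⟩; rw [hyv h]; omega
          · have := hv (by omega); omega
      · have hxe : x = j * (x1 + 1) + x1 + 1 := by rw [hx]; ring
        have e1 : SG (x - 1) (y + 1) = LF b x1 j x1 (y + 1) :=
          ihx (x - 1) (by omega) j x1 (y + 1) (by omega) le_rfl
        have e2 : SG (x - x1) y = LF b x1 j 1 y :=
          ihx (x - x1) (by omega) j 1 y (by omega) (by omega)
        have hv : LF b x1 (j + 1) 0 y = ((y + j + 1) / b) % 2 := by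
          simp [LF, hx1, add_assoc]
        have e1' : SG (x - 1) (y + 1) = 1 - LF b x1 (j + 1) 0 y ∨ 2 ≤ SG (x - 1) (y + 1) := by
          rw [e1, hv]
          simp only [LF, lt_irrefl, if_false]
          rw [show y + 1 + j = y + j + 1 by ring]
          split_ifs <;> omega
        have e2' : SG (x - x1) y = 1 - LF b x1 (j + 1) 0 y ∨ 2 ≤ SG (x - x1) y := by
          rw [e2, hv]
          simp only [LF]
          split_ifs with c1 c2
          · omega
          · have : x1 = 1 := by omega
            subst this
            omega
          · omega
        have e3 : SG (x - 1) (y + 1) = 1 - LF b x1 (j + 1) 0 y ∨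
            SG (x - x1) y = 1 - LF b x1 (j + 1) 0 y := by
          by_cases h1 : x1 = 1
          · subst h1
            rw [e1, e2, hv]
            have hb2 : 2 ≤ b := by omega
            simp only [LF, lt_irrefl, if_false]
            rw [show y + 1 + j = y + j + 1 by ring]
            have key : (y + j + 1 + 1) / b = (y + j + 1) / b ∨ (y + j + 1) / b = (y + j) / b := by
              have s1 : (y + j + 1 + 1) / b = (y + j + 1) / b + if b ∣ y + j + 1 + 1 then 1 else 0 :=
                Nat.succ_div
              have s2 : (y + j + 1) / b = (y + j) / b + if b ∣ y + j + 1 then 1 else 0 :=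
                Nat.succ_div
              by_cases c1 : b ∣ y + j + 1 + 1
              · by_cases c2 : b ∣ y + j + 1
                · have := (Nat.dvd_add_right c2).1 c1
                  have := Nat.le_of_dvd one_pos this
                  omega
                · rw [if_neg c2] at s2
                  right; exact s2
              · rw [if_neg c1] at s1
                left; exact s1
            split_ifs <;> omega
          · right
            rw [e2, hv]
            have : 1 < x1 := by omega
            simp only [LF, this, if_true]
            omega
        have hle : LF b x1 (j + 1) 0 y < 2 := by rw [hv]; omega
        apply sg_step hSG
        · intro h; rw [hyv h]; omega
        · intro h; omega
        · intro h; omega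
        · intro m hm
          rcases e3 with e3 | e3
          · right; right; omega
          · right; left; omega
    · have e1 : SG (x - 1) (y + 1) = LF b x1 i (r - 1) (y + 1) :=
        ihx (x - 1) (by omega) i (r - 1) (y + 1) (by omega) (by omega)
      have hv : LF b x1 i r y = (r + (y + i + r) / b) % 2 := by simp [LF, hlt]
      have hle : LF b x1 i r y < 2 := by rw [hv]; omega
      have e1' : SG (x - 1) (y + 1) = 1 - LF b x1 i r y := by
        rw [e1, hv]
        have : r - 1 < x1 := by omega
        simp only [LF, this, if_true]
        rw [show y + 1 + i + (r - 1) = y + i + r by omega]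
        omega
      have e2' : x1 ≤ x → SG (x - x1) y = 1 - LF b x1 i r y ∨ 2 ≤ SG (x - x1) y := by
        intro h
        rcases i with _ | j
        · omega
        have hxe : x = j * (x1 + 1) + x1 + 1 + r := by rw [hx]; ring
        have e2 : SG (x - x1) y = LF b x1 j (r + 1) y :=
          ihx (x - x1) (by omega) j (r + 1) y (by omega) (by omega)
        rw [e2, hv]
        simp only [LF]
        rw [show y + j + (r + 1) = y + (j + 1) + r by ring]
        split_ifs with c1 c2
        · omega
        · have : x1 = r + 1 := by omega
          subst this
          rw [show y + j + (r + 1) = y + (j + 1) + r by ring] at c2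
          omega
        · omega
      apply sg_step hSG
      · intro h; rw [hyv h]; omega
      · intro h; have := e2' h; omega
      · intro h; omega
      · intro m hm
        right; right; omega
  · have hrx : r = x1 := by omega
    subst hrx
    have e1 : SG (x - 1) (y + 1) = LF b r i (r - 1) (y + 1) :=
      ihx (x - 1) (by omega) i (r - 1) (y + 1) (by omega) (by omega)
    have e2 : SG (x - r) y = LF b r i 0 y :=
      ihx (x - r) (by omega) i 0 y (by omega) (by omega)
    have e1' : SG (x - 1) (y + 1) = 1 - (r + (y + i + r) / b) % 2 := by
      rw [e1]
      have : r - 1 < r := by omega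
      simp only [LF, this, if_true]
      rw [show y + 1 + i + (r - 1) = y + i + r by omega]
      omega
    have e2' : SG (x - r) y = 1 - ((y + i) / b + 1) % 2 := by
      rw [e2]
      simp only [LF, hx1, if_true, add_zero, zero_add]
      omega
    have d1 := hdiv (i + r)
    have d2 := hdiv i
    have d3 := hdiv 0
    have d4 : y < b → y / b = 0 := fun h => Nat.div_eq_of_lt h
    simp only [← add_assoc, add_zero] at d1 d2 d3
    simp only [LF, lt_irrefl, if_false] at hy ⊢
    generalize (y + i + r) / b = P at *
    generalize (y + i) / b = Q at *
    generalize y / b = R at *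
    generalize (y - b + i + r) / b = P' at *
    generalize (y - b + i) / b = Q' at *
    generalize (y - b) / b = R' at *
    by_cases hc : (r + P) % 2 = (Q + 1) % 2
    · rw [if_pos hc]
      apply sg_step hSG
      · intro h
        have := hy h
        rw [if_pos (by have := d1 h; have := d2 h; omega)] at this
        have := d2 h
        omega
      · intro h; omega
      · intro h; omega
      · intro m hm
        right; left
        exact ⟨by omega, by omega⟩
    · rw [if_neg hc]
      have hy' : b ≤ y → SG x (y - b) = 3 - R % 2 := by
        intro h
        have := hy h
        rw [if_neg (by have := d1 h; have := d2 h; omega)] at this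
        have := d3 h
        omega
      apply sg_step hSG
      · intro h; have := hy' h; omega
      · intro h; omega
      · intro h; omega
      · intro m hm
        have hxr : r ≤ x := by omega
        have hx1' : 1 ≤ x := by omega
        by_cases hm2 : m = 2
        · left
          have : b ≤ y := by
            by_contra h
            have := d4 (by omega)
            omega
          refine ⟨this, ?_⟩
          have := hy' this
          omega
        · right
          have : SG (x - r) y = m ∨ SG (x - 1) (y + 1) = m := by omega
          rcases this with h | h
          · exact Or.inl ⟨hxr, h⟩
          · exact Or.inr ⟨hx1', h⟩

theorem sg_case_a {SG : ℕ → ℕ → ℕ} (hSG : IsLengyelSG 1 1 0 1 1 SG) :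
    ∀ x y, SG x y = 2 * (x % 2) + y % 2 := by
  intro x
  induction x with
  | zero =>
    intro y
    induction y with
    | zero => apply sg_step hSG <;> omega
    | succ y ih =>
      apply sg_step hSG
      · intro _; simp only [Nat.add_sub_cancel]; omega
      · omega
      · omega
      · intro m hm; left; simp only [Nat.add_sub_cancel]; omega
  | succ x ihx =>
    intro y
    have e1 := ihx y
    have e2 := ihx (y + 1)
    induction y with
    | zero =>
      apply sg_step hSG <;> (try simp only [Nat.add_sub_cancel])
      · omega
      · omega
      · omega
      · intro m hm; right; omega
    | succ y ih =>
      have e3 := ih (ihx _) (ihx _)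
      apply sg_step hSG <;> (try simp only [Nat.add_sub_cancel])
      · omega
      · omega
      · omega
      · intro m hm; omega

theorem div_shift_ne {b q : ℕ} (hq : 0 < q) (hq2 : q < 2 * b)
    (h : ∀ y, ((y + q) / b) % 2 = (y / b) % 2) : False := by
  have hb : 0 < b := by omega
  have h0 := h 0
  simp only [zero_add, Nat.zero_div, Nat.zero_mod] at h0
  rcases Nat.lt_or_ge q b with hl | hl
  · have h1 := h (b - q)
    rw [Nat.sub_add_cancel hl.le, Nat.div_self hb, Nat.div_eq_of_lt (by omega)] at h1
    omega
  · have : q / b = 1 := by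
      rw [Nat.div_eq_iff hb]; omega
    omega

theorem add_two_mul_div {b : ℕ} (hb : 0 < b) (n : ℕ) : (n + 2 * b) / b = n / b + 2 :=
  Nat.add_mul_div_right _ _ hb

theorem vertical_period {b x1 : ℕ} (hb : 0 < b) (hx1 : 0 < x1) (hne : ¬ (b = 1 ∧ x1 = 1))
    {SG : ℕ → ℕ → ℕ} (hSG : IsLengyelSG b x1 0 1 1 SG) :
    IsLeast {q : ℕ | 0 < q ∧ ∀ x y : ℕ, SG x (y + q) = SG x y} (2 * b) := by
  have hF := sg_formula hb hx1 hne hSG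
  constructor
  · refine ⟨by omega, fun x y => ?_⟩
    have hx : x = x / (x1 + 1) * (x1 + 1) + x % (x1 + 1) := (Nat.div_add_mod' x (x1 + 1)).symm
    have hr : x % (x1 + 1) ≤ x1 := Nat.lt_succ_iff.1 (Nat.mod_lt _ (by omega))
    rw [hF x _ _ _ hx hr, hF x _ _ _ hx hr]
    generalize x / (x1 + 1) = i
    generalize x % (x1 + 1) = r
    simp only [LF]
    rw [show y + 2 * b + i + r = y + i + r + 2 * b by ring,
      show y + 2 * b + i + x1 = y + i + x1 + 2 * b by ring,
      show y + 2 * b + i = y + i + 2 * b by ring]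
    simp only [add_two_mul_div hb]
    split_ifs <;> omega
  · rintro q ⟨hq, h⟩
    by_contra hlt
    apply div_shift_ne hq (not_le.1 hlt)
    intro y
    have := h 0 y
    rw [hF 0 0 0 _ (by simp) (by omega), hF 0 0 0 _ (by simp) (by omega)] at this
    simpa [LF, hx1] using this

theorem connector {b x1 i : ℕ} (hb : 0 < b)
    (h : ∀ y, (x1 + (y + i + x1) / b) % 2 = ((y + i) / b + 1) % 2) :
    Even b ∧ ∃ k : ℕ, Odd k ∧ x1 = k * b := by
  have h' : ∀ t, (x1 + (t + x1) / b) % 2 = (t / b + 1) % 2 := by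
    intro t
    have hi : i ≤ i * (2 * b) := Nat.le_mul_of_pos_right _ (by omega)
    have := h (t + i * (2 * b) - i)
    rw [show t + i * (2 * b) - i + i = t + (2 * i) * b by
      rw [Nat.sub_add_cancel (by omega)]; ring,
      show t + (2 * i) * b + x1 = t + x1 + (2 * i) * b by ring,
      Nat.add_mul_div_right _ _ hb, Nat.add_mul_div_right _ _ hb] at this
    omega
  have h0 := h' 0
  simp only [zero_add, Nat.zero_div] at h0
  have hmod : x1 % b = 0 := by
    by_contra hm
    have hlt := Nat.mod_lt x1 hb
    have h1 := h' (b - x1 % b)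
    have e : b - x1 % b + x1 = (x1 / b + 1) * b := by
      have := Nat.div_add_mod' x1 b
      have : (x1 / b + 1) * b = x1 / b * b + b := by ring
      omega
    rw [e, Nat.mul_div_cancel _ hb, Nat.div_eq_of_lt (show b - x1 % b < b by omega)] at h1
    omega
  have hk : x1 = x1 / b * b := by
    have := Nat.div_add_mod' x1 b
    omega
  generalize x1 / b = k at *
  subst hk
  have hodd : Odd (k * b + k) := by rw [Nat.odd_iff]; omega
  have : Odd (k * (b + 1)) := by rw [mul_add, mul_one]; exact hodd
  obtain ⟨ho, hb1⟩ := Nat.odd_mul.1 this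
  refine ⟨?_, k, ho, rfl⟩
  rw [Nat.odd_iff] at hb1
  rw [Nat.even_iff]
  omega

theorem sg_case_b {b x1 k : ℕ} (hb : 0 < b) (hx1 : 0 < x1) (hbe : Even b) (hk : Odd k)
    (hxk : x1 = k * b) {SG : ℕ → ℕ → ℕ} (hSG : IsLengyelSG b x1 0 1 1 SG) (x y : ℕ) :
    SG x y = (x + (x + y) / b) % 2 := by
  have hb2 : b % 2 = 0 := Nat.even_iff.1 hbe
  have hk2 : k % 2 = 1 := Nat.odd_iff.1 hk
  have hx2 : x1 % 2 = 0 := by rw [hxk, Nat.mul_mod, hb2]; simp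
  have hF := sg_formula hb hx1 (by omega) hSG
  have hx : x = x / (x1 + 1) * (x1 + 1) + x % (x1 + 1) := (Nat.div_add_mod' x (x1 + 1)).symm
  have hr : x % (x1 + 1) ≤ x1 := Nat.lt_succ_iff.1 (Nat.mod_lt _ (by omega))
  rw [hF x _ _ _ hx hr]
  generalize x / (x1 + 1) = i at *
  generalize x % (x1 + 1) = r at *
  have h1 : (x + y) / b = (y + i + r) / b + i * k := by
    rw [← Nat.add_mul_div_right _ _ hb]
    congr 1
    rw [hx, hxk]; ring
  have h2 : (i * k) % 2 = i % 2 := by rw [Nat.mul_mod, hk2]; simp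
  have h3 : x % 2 = (i + r) % 2 := by
    rw [hx, Nat.add_mod, Nat.mul_mod, Nat.add_mod x1, hx2]; simp
  have h4 : (y + i + x1) / b = (y + i) / b + k := by
    rw [hxk, Nat.add_mul_div_right _ _ hb]
  rw [h1]
  simp only [LF]
  split_ifs with c1 c2
  · omega
  · have : r = x1 := by omega
    subst this
    omega
  · omega

theorem horizontal_b {b x1 k : ℕ} (hb : 0 < b) (hx1 : 0 < x1) (hbe : Even b) (hk : Odd k)
    (hxk : x1 = k * b) {SG : ℕ → ℕ → ℕ} (hSG : IsLengyelSG b x1 0 1 1 SG) :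
    IsLeast {p : ℕ | 0 < p ∧ ∀ x y : ℕ, SG (x + p) y = SG x y} (2 * b) := by
  have hF := sg_case_b hb hx1 hbe hk hxk hSG
  have hb2 : b % 2 = 0 := Nat.even_iff.1 hbe
  constructor
  · refine ⟨by omega, fun x y => ?_⟩
    rw [hF, hF, show x + 2 * b + y = x + y + 2 * b by ring, add_two_mul_div hb]
    omega
  · rintro p ⟨hp, h⟩
    by_contra hlt
    have hlt : p < 2 * b := not_le.1 hlt
    have h' : ∀ y, (p + (p + y) / b) % 2 = (y / b) % 2 := by
      intro y
      have := h 0 y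
      rw [hF, hF] at this
      simpa using this
    by_cases hpe : p % 2 = 0
    · apply div_shift_ne hp hlt
      intro y
      have := h' y
      rw [add_comm p y] at this
      omega
    · have h0 := h' 0
      simp only [add_zero, Nat.zero_div] at h0
      have hbp : b < p := by
        rcases Nat.lt_trichotomy p b with hl | hl | hl
        · rw [Nat.div_eq_of_lt hl] at h0; omega
        · omega
        · exact hl
      have h1 := h' (2 * b - p)
      rw [show p + (2 * b - p) = 2 * b by omega, Nat.mul_div_cancel _ hb,
        Nat.div_eq_of_lt (by omega)] at h1
      omega

theorem horizontal_c {b x1 : ℕ} (hb : 0 < b) (hx1 : 0 < x1) (hne : ¬ (b = 1 ∧ x1 = 1))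
    (hnb : ¬ (Even b ∧ ∃ k : ℕ, Odd k ∧ x1 = k * b))
    {SG : ℕ → ℕ → ℕ} (hSG : IsLengyelSG b x1 0 1 1 SG) :
    IsLeast {p : ℕ | 0 < p ∧ ∀ x y : ℕ, SG (x + p) y = SG x y} (2 * b * (x1 + 1)) := by
  have hF := sg_formula hb hx1 hne hSG
  constructor
  · refine ⟨by positivity, fun x y => ?_⟩
    have hx : x = x / (x1 + 1) * (x1 + 1) + x % (x1 + 1) := (Nat.div_add_mod' x (x1 + 1)).symm
    have hr : x % (x1 + 1) ≤ x1 := Nat.lt_succ_iff.1 (Nat.mod_lt _ (by omega))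
    generalize x / (x1 + 1) = i at *
    generalize x % (x1 + 1) = r at *
    rw [hF x _ _ _ hx hr, hF (x + 2 * b * (x1 + 1)) (i + 2 * b) r _ (by rw [hx]; ring) hr]
    simp only [LF]
    rw [show y + (i + 2 * b) + r = y + i + r + 2 * b by ring,
      show y + (i + 2 * b) + x1 = y + i + x1 + 2 * b by ring,
      show y + (i + 2 * b) = y + i + 2 * b by ring]
    simp only [add_two_mul_div hb]
    split_ifs <;> omega
  · rintro p ⟨hp, h⟩
    by_contra hlt
    have hlt : p < 2 * b * (x1 + 1) := not_le.1 hlt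
    have hi : p / (x1 + 1) < 2 * b := Nat.div_lt_of_lt_mul (by rw [mul_comm]; exact hlt)
    have hpe : p = p / (x1 + 1) * (x1 + 1) + p % (x1 + 1) := (Nat.div_add_mod' p (x1 + 1)).symm
    have hr : p % (x1 + 1) ≤ x1 := Nat.lt_succ_iff.1 (Nat.mod_lt _ (by omega))
    generalize p / (x1 + 1) = i at *
    generalize p % (x1 + 1) = r at *
    rcases Nat.eq_zero_or_pos r with h0 | hpos
    · subst h0
      have hi0 : 0 < i := by
        rcases Nat.eq_zero_or_pos i with h | h
        · subst h; omega
        · exact h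
      apply div_shift_ne hi0 hi
      intro y
      have := h 0 y
      rw [hF 0 0 0 _ (by simp) (by omega), hF (0 + p) i 0 _ (by omega) (by omega)] at this
      simpa [LF, hx1] using this
    · apply hnb
      apply connector (i := i) hb
      intro y
      have := h (x1 - r) y
      rw [hF (x1 - r) 0 (x1 - r) _ (by simp) (by omega),
        hF (x1 - r + p) i x1 _ (by omega) le_rfl] at this
      have hl : x1 - r < x1 := by omega
      simp only [LF, lt_irrefl, if_false, hl, if_true] at this
      split_ifs at this with hc
      · exact hc
      · omega

/-- First Main Theorem for `L(b;x₁,0;1,1)`: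
(a) if `b = 1` and `x₁ = 1`, the period is `(2,2)`;
(b) if `b` is even and `x₁` is an odd multiple of `b`, the period is `(2b, 2b)`;
(c) in all other cases, the period is `(2b(x₁+1), 2b)`.
Here "period `(p,q)`" means `p` is the least positive horizontal period and `q` the least
positive vertical period. -/
theorem first_main_theorem (b x1 : ℕ) (hb : 0 < b) (hx1 : 0 < x1)
    (SG : ℕ → ℕ → ℕ) (hSG : IsLengyelSG b x1 0 1 1 SG) :
    ((b = 1 ∧ x1 = 1) →
      (IsLeast {p : ℕ | 0 < p ∧ ∀ x y : ℕ, SG (x + p) y = SG x y} 2 ∧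
       IsLeast {q : ℕ | 0 < q ∧ ∀ x y : ℕ, SG x (y + q) = SG x y} 2)) ∧
    ((Even b ∧ ∃ k : ℕ, Odd k ∧ x1 = k * b) →
      (IsLeast {p : ℕ | 0 < p ∧ ∀ x y : ℕ, SG (x + p) y = SG x y} (2 * b) ∧
       IsLeast {q : ℕ | 0 < q ∧ ∀ x y : ℕ, SG x (y + q) = SG x y} (2 * b))) ∧
    (¬ (b = 1 ∧ x1 = 1) → ¬ (Even b ∧ ∃ k : ℕ, Odd k ∧ x1 = k * b) →
      (IsLeast {p : ℕ | 0 < p ∧ ∀ x y : ℕ, SG (x + p) y = SG x y} (2 * b * (x1 + 1)) ∧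
       IsLeast {q : ℕ | 0 < q ∧ ∀ x y : ℕ, SG x (y + q) = SG x y} (2 * b))) := by
  refine ⟨?_, ?_, ?_⟩
  · rintro ⟨rfl, rfl⟩
    have hF := sg_case_a hSG
    refine ⟨⟨⟨by omega, fun x y => ?_⟩, ?_⟩, ⟨⟨by omega, fun x y => ?_⟩, ?_⟩⟩
    · rw [hF, hF]; omega
    · rintro p ⟨hp, h⟩
      have := h 0 0
      rw [hF, hF] at this
      omega
    · rw [hF, hF]; omega
    · rintro p ⟨hp, h⟩
      have := h 0 0
      rw [hF, hF] at this
      omega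
  · rintro ⟨hbe, k, hk, hxk⟩
    have hb2 : b % 2 = 0 := Nat.even_iff.1 hbe
    exact ⟨horizontal_b hb hx1 hbe hk hxk hSG, vertical_period hb hx1 (by omega) hSG⟩
  · intro hne hnb
    exact ⟨horizontal_c hb hx1 hne hnb hSG, vertical_period hb hx1 hne hSG⟩
end
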